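/- arXiv:2202.01278 — 4 statements merged into one kernel-verified Lean document; each statement's English description precedes it below -/
import Mathlib

section
/- Let m ∈ ℕ with m ≥ 1 and let α > m−1. Then all roots of the polynomial L_m^{(−α−1)} in ℂ are simple; that is, L_m^{(−α−1)} and its derivative have no common root in ℂ. -/
open Finset

/-- Generalized binomial coefficient `C(t, j) = t(t-1)⋯(t-j+1)/j!`. -/
noncomputable def genBinom (t : ℝ) (j : ℕ) : ℝ :=
  (∏ i ∈ Finset.range j, (t - i)) / (Nat.factorial j)

/-- Generalized Laguerre polynomial `L_n^{(α)}(x)` evaluated at complex `x`. -/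
noncomputable def laguerreC (α : ℝ) (n : ℕ) (x : ℂ) : ℂ :=
  ∑ k ∈ Finset.range (n + 1),
    ((-1 : ℂ) ^ k / (Nat.factorial k)) * (genBinom ((n : ℝ) + α) (n - k) : ℂ) * x ^ k

/-!
A nonzero polynomial `p` satisfying `a p'' + b p' + c p = 0` has no multiple root `z` with
`a(z) ≠ 0`: if `z` is a root of `p` of multiplicity `k ≥ 2`, then `(X - z)^(k-1)` divides `p` and
`p'`, hence `a p''`, hence `p''`, although `z` is a root of `p''` of multiplicity only `k - 2`.
Laguerre's equation `x y'' + (β + 1 - x) y' + n y = 0` therefore leaves only `z = 0` to consider.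
There the linear coefficient of `L_n^{(β)}` is `-C(n + β, n - 1)`, which vanishes only if
`β ∈ {-n, …, -2}`; for these exceptional `β = -j`, the root `0` has multiplicity `j`.
-/

open Polynomial

theorem derivative_ne_zero_of_isRoot {R : Type*} [Semiring R] [IsAddTorsionFree R] {p : R[X]}
    {z : R} (hp : p ≠ 0) (hz : p.IsRoot z) : derivative p ≠ 0 := by
  contrapose! hp
  rw [eq_C_of_derivative_eq_zero hp, IsRoot.def, eval_C] at hz
  rw [eq_C_of_derivative_eq_zero hp, hz, C_0]

theorem eval_derivative_ne_zero_of_ode {R : Type*} [CommRing R] [IsDomain R] [CharZero R]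
    {a b c p : R[X]} {z : R} (hp : p ≠ 0)
    (hode : a * derivative (derivative p) + b * derivative p + c * p = 0)
    (ha : a.eval z ≠ 0) (hz : p.eval z = 0) : (derivative p).eval z ≠ 0 := by
  intro hz'
  have hp' : derivative p ≠ 0 := derivative_ne_zero_of_isRoot hp hz
  have hp'' : derivative (derivative p) ≠ 0 := derivative_ne_zero_of_isRoot hp' hz'
  have hmult : (derivative p).rootMultiplicity z = p.rootMultiplicity z - 1 :=
    derivative_rootMultiplicity_of_root hz
  have hmult' : (derivative (derivative p)).rootMultiplicity z =
      (derivative p).rootMultiplicity z - 1 := derivative_rootMultiplicity_of_root hz'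
  have hpos : 0 < (derivative p).rootMultiplicity z := (rootMultiplicity_pos hp').2 hz'
  set k := (derivative p).rootMultiplicity z
  have hdvd' : (X - C z) ^ k ∣ derivative p := pow_rootMultiplicity_dvd _ z
  have hdvd : (X - C z) ^ k ∣ p :=
    (pow_dvd_pow _ (hmult.trans_le (Nat.sub_le _ _))).trans (pow_rootMultiplicity_dvd p z)
  have hdvd_mul : (X - C z) ^ k ∣ a * derivative (derivative p) := by
    rw [show a * derivative (derivative p) = -(b * derivative p + c * p) by
      linear_combination hode]
    exact ((hdvd'.mul_left b).add (hdvd.mul_left c)).neg_right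
  have hdvd'' : (X - C z) ^ k ∣ derivative (derivative p) :=
    (prime_X_sub_C z).pow_dvd_of_dvd_mul_left k (mt dvd_iff_isRoot.1 ha) hdvd_mul
  have hle := (le_rootMultiplicity_iff hp'').2 hdvd''
  lia

theorem genBinom_succ (t : ℝ) (j : ℕ) :
    (j + 1) * genBinom t (j + 1) = (t - j) * genBinom t j := by
  simp only [genBinom, prod_range_succ, Nat.factorial_succ]
  push_cast
  field_simp

theorem genBinom_eq_zero_iff {t : ℝ} {j : ℕ} : genBinom t j = 0 ↔ ∃ i < j, t = i := by
  simp [genBinom, prod_eq_zero_iff, sub_eq_zero, Nat.factorial_ne_zero]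

/-- The generalized Laguerre polynomial `L_n^{(β)}` as an element of `ℂ[X]`, whose polynomial
function is `laguerreC β n`. -/
noncomputable def laguerrePoly (β : ℝ) (n : ℕ) : ℂ[X] :=
  ∑ k ∈ range (n + 1),
    monomial k ((-1 : ℂ) ^ k / (Nat.factorial k) * (genBinom ((n : ℝ) + β) (n - k) : ℂ))

namespace laguerrePoly

variable (β : ℝ) (n : ℕ)

theorem eval_eq_laguerreC (z : ℂ) : (laguerrePoly β n).eval z = laguerreC β n z := by
  simp [laguerrePoly, laguerreC, eval_finsetSum]

theorem eval_derivative_eq_deriv_laguerreC (z : ℂ) :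
    (derivative (laguerrePoly β n)).eval z = deriv (laguerreC β n) z := by
  rw [← Polynomial.deriv]
  exact congrArg (deriv · z) (funext (eval_eq_laguerreC β n))

theorem coeff_of_le {k : ℕ} (hk : k ≤ n) : (laguerrePoly β n).coeff k =
    (-1 : ℂ) ^ k / (Nat.factorial k) * (genBinom ((n : ℝ) + β) (n - k) : ℂ) := by
  simp [laguerrePoly, coeff_monomial, Nat.lt_succ_of_le hk]

theorem coeff_of_lt {k : ℕ} (hk : n < k) : (laguerrePoly β n).coeff k = 0 := by
  simp [laguerrePoly, coeff_monomial, hk.not_ge]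

theorem ne_zero : laguerrePoly β n ≠ 0 := by
  have hcoeff : (laguerrePoly β n).coeff n ≠ 0 := by
    simp [coeff_of_le, genBinom, Nat.factorial_ne_zero]
  exact fun h => hcoeff (by rw [h, coeff_zero])

variable {β n} in
theorem coeff_one_ne_zero (hn : 1 ≤ n) (hβ : ∀ j ∈ Icc 2 n, β ≠ -j) :
    (laguerrePoly β n).coeff 1 ≠ 0 := by
  have hbinom : genBinom (n + β) (n - 1) ≠ 0 := by
    rw [Ne, genBinom_eq_zero_iff]
    rintro ⟨i, hi, h⟩
    refine hβ (n - i) (mem_Icc.2 (by lia)) ?_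
    rw [Nat.cast_sub (by lia)]
    linarith
  simpa [coeff_of_le β n hn] using hbinom

theorem coeff_succ (k : ℕ) :
    ((k : ℂ) + 1) * (k + 1 + β) * (laguerrePoly β n).coeff (k + 1) =
      (k - n) * (laguerrePoly β n).coeff k := by
  rcases lt_trichotomy k n with hk | rfl | hk
  · obtain ⟨j, rfl⟩ := Nat.exists_eq_add_of_lt hk
    have hbinom := congrArg ((↑) : ℝ → ℂ) (genBinom_succ ((k + j + 1 : ℕ) + β) j)
    rw [coeff_of_le _ _ hk.le, coeff_of_le _ _ hk, show k + j + 1 - k = j + 1 by lia,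
      show k + j + 1 - (k + 1) = j by lia, pow_succ, Nat.factorial_succ]
    have hfactorial : (Nat.factorial k : ℂ) ≠ 0 := by exact_mod_cast Nat.factorial_ne_zero k
    have hsucc : (k : ℂ) + 1 ≠ 0 := by exact_mod_cast Nat.succ_ne_zero k
    push_cast at hbinom ⊢
    field_simp
    linear_combination hbinom
  · simp [coeff_of_lt]
  · simp [coeff_of_lt, hk, hk.trans (Nat.lt_succ_self k)]

theorem ode : X * derivative (derivative (laguerrePoly β n)) +
    (C (β + 1 : ℂ) - X) * derivative (laguerrePoly β n) + C (n : ℂ) * laguerrePoly β n = 0 := by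
  ext k
  have hrec := coeff_succ β n k
  rcases k with _ | k
  · simp only [add_mul, sub_mul, C_add, C_1, one_mul, coeff_add, coeff_sub, mul_coeff_zero,
      coeff_X_zero, coeff_C_zero, coeff_derivative, coeff_zero] at hrec ⊢
    push_cast at hrec ⊢
    linear_combination hrec
  · simp only [add_mul, sub_mul, C_add, C_1, one_mul, coeff_add, coeff_sub, coeff_X_mul,
      coeff_C_mul, coeff_derivative, coeff_zero] at hrec ⊢
    push_cast at hrec ⊢
    linear_combination hrec

end laguerrePoly

theorem stmt16_general (β : ℝ) (n : ℕ) (hβ : ∀ j ∈ Icc 2 n, β ≠ -j) :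
    ∀ z : ℂ, laguerreC β n z = 0 → deriv (laguerreC β n) z ≠ 0 := by
  intro z hz
  rw [← laguerrePoly.eval_eq_laguerreC] at hz
  rw [← laguerrePoly.eval_derivative_eq_deriv_laguerreC]
  rcases eq_or_ne z 0 with rfl | hz0
  · have hn : 1 ≤ n := by
      by_contra! h
      obtain rfl : n = 0 := by lia
      simp [laguerrePoly, genBinom] at hz
    simpa [← coeff_zero_eq_eval_zero, coeff_derivative] using
      laguerrePoly.coeff_one_ne_zero hn hβ
  · exact eval_derivative_ne_zero_of_ode (laguerrePoly.ne_zero β n) (laguerrePoly.ode β n)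
      (by simpa using hz0) hz

theorem stmt16 (m : ℕ) (hm : 1 ≤ m) (α : ℝ) (hα : (m : ℝ) - 1 < α) :
    ∀ z : ℂ, laguerreC (-α - 1) m z = 0 → deriv (laguerreC (-α - 1) m) z ≠ 0 := by
  refine stmt16_general (-α - 1) m fun j hj h => ?_
  have hjm : (j : ℝ) ≤ m := by exact_mod_cast (mem_Icc.1 hj).2
  linarith
end

section
/- Let m ∈ ℕ with m ≥ 1 and let α > m−1. Then L_m^{(−α−1)}(x) ≠ 0 for every real x > 0. -/
open Finset

/-- Generalized Laguerre polynomial `L_n^{(α)}(x)`. -/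
noncomputable def laguerre (α : ℝ) (n : ℕ) (x : ℝ) : ℝ :=
  ∑ k ∈ Finset.range (n + 1),
    ((-1 : ℝ) ^ k / (Nat.factorial k)) * genBinom ((n : ℝ) + α) (n - k) * x ^ k

/-! A generalized binomial coefficient `C(t, j)` with `t < 0` has sign `(-1) ^ j`, because its `j`
factors are all negative. For `n + α < 0` the coefficient of `x ^ k` in `L_n^{(α)}` therefore has
sign `(-1) ^ k * (-1) ^ (n - k) = (-1) ^ n`, independently of `k`, so that nothing cancels at a
positive `x`. -/

theorem neg_one_pow_mul_genBinom (t : ℝ) (j : ℕ) :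
    (-1) ^ j * genBinom t j = (ascPochhammer ℝ j).eval (-t) / j.factorial := by
  rw [genBinom, ascPochhammer_eval_neg_eq_descPochhammer, descPochhammer_eval_eq_prod_range,
    mul_div_assoc]

theorem neg_one_pow_mul_genBinom_pos {t : ℝ} (ht : t < 0) (j : ℕ) :
    0 < (-1) ^ j * genBinom t j := by
  rw [neg_one_pow_mul_genBinom]
  have hpoch : 0 < (ascPochhammer ℝ j).eval (-t) := ascPochhammer_pos j (-t) (neg_pos.mpr ht)
  positivity

theorem neg_one_pow_mul_laguerre (α : ℝ) (n : ℕ) (x : ℝ) :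
    (-1) ^ n * laguerre α n x =
      ∑ k ∈ range (n + 1), (-1) ^ (n - k) * genBinom (n + α) (n - k) * (x ^ k / k.factorial) := by
  rw [laguerre, mul_sum]
  refine sum_congr rfl fun k hk => ?_
  have hsign : (-1 : ℝ) ^ n * (-1) ^ k = (-1) ^ (n - k) := by
    rw [← pow_sub_mul_pow (-1 : ℝ) (mem_range_succ_iff.mp hk), mul_assoc, ← mul_pow]
    simp
  rw [← hsign]
  ring

theorem neg_one_pow_mul_laguerre_pos {α : ℝ} {n : ℕ} (hα : n + α < 0) {x : ℝ} (hx : 0 ≤ x) :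
    0 < (-1) ^ n * laguerre α n x := by
  rw [neg_one_pow_mul_laguerre]
  have hcoeff (k : ℕ) : 0 < (-1) ^ (n - k) * genBinom (n + α) (n - k) :=
    neg_one_pow_mul_genBinom_pos hα (n - k)
  refine sum_pos' (fun k _ => mul_nonneg (hcoeff k).le (by positivity)) ⟨0, by simp, ?_⟩
  exact mul_pos (hcoeff 0) (by simp)

theorem stmt17 (m : ℕ) (hm : 1 ≤ m) (α : ℝ) (hα : (m : ℝ) - 1 < α) :
    ∀ x : ℝ, 0 < x → laguerre (-α - 1) m x ≠ 0 := by
  intro x hx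
  have hneg : (m : ℝ) + (-α - 1) < 0 := by linarith
  exact right_ne_zero_of_mul (neg_one_pow_mul_laguerre_pos hneg hx.le).ne'
end

section
/- Let n ∈ ℕ with n ≥ 1 and let α, β ∈ ℝ satisfy α ∉ {−1,−2,…,−n}, β ∉ {−1,−2,…,−n}, and α+β ∉ {−1−n,−2−n,…,−2n}. Then all roots of the Jacobi polynomial P_n^{(α,β)} in ℂ are simple; that is, P_n^{(α,β)} and its derivative have no common root in ℂ. -/
open Finset

/-- Jacobi polynomial `P_n^{(α,β)}(x)` for arbitrary real parameters,
evaluated at complex `x`. -/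
noncomputable def jacobiC (α β : ℝ) (n : ℕ) (x : ℂ) : ℂ :=
  (Nat.factorial n : ℂ)⁻¹ *
    ∑ k ∈ Finset.range (n + 1),
      (n.choose k : ℂ) *
        (∏ i ∈ Finset.Ico k n, ((α : ℂ) + i + 1)) *
        (∏ i ∈ Finset.range k, ((α : ℂ) + β + n + 1 + i)) *
        ((x - 1) / 2) ^ k

/-!
A polynomial solution of `σ y'' + τ y' + ρ y = 0` vanishing to order `m ≥ 2` at `z` forces, on
comparing the lowest-order terms, first `σ(z) = 0` and then the indicial equation
`(m - 1) σ'(z) + τ(z) = 0`. For the Jacobi equation `σ = X² - 1`, so `z = ±1`, and the indicial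
equation becomes `α = -m` at `1` and `β = -m` at `-1`, with `2 ≤ m ≤ n`.
The solution must also be nonzero, which follows from its value at `1`.
-/

section

open Polynomial

lemma ode_div_X_sub_C_pow {R : Type*} [CommRing R] [IsDomain R] {σ τ ρ q : R[X]} {z : R} {k : ℕ}
    (hode : σ * derivative (derivative ((X - C z) ^ (k + 2) * q))
      + τ * derivative ((X - C z) ^ (k + 2) * q) + ρ * ((X - C z) ^ (k + 2) * q) = 0) :
    σ * (C (((k : R) + 2) * (k + 1)) * q + (X - C z) *
        (C (2 * ((k : R) + 2)) * derivative q + (X - C z) * derivative (derivative q)))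
      + (X - C z) * (τ * (C ((k : R) + 2) * q + (X - C z) * derivative q)
        + (X - C z) * (ρ * q)) = 0 := by
  refine (mul_eq_zero.mp ?_).resolve_left (pow_ne_zero k (X_sub_C_ne_zero z))
  simp only [derivative_mul, derivative_add, derivative_X_sub_C_pow, derivative_C,
    Nat.reduceSubDiff, Nat.add_sub_cancel] at hode
  push_cast [map_mul, map_add, map_natCast, map_ofNat, map_one] at hode ⊢
  linear_combination hode

lemma indicial_equation_of_ode {R : Type*} [CommRing R] [IsDomain R] [CharZero R]
    {p σ τ ρ : R[X]} {z : R} (hp : p ≠ 0)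
    (hode : σ * derivative (derivative p) + τ * derivative p + ρ * p = 0)
    (hm : 2 ≤ p.rootMultiplicity z) :
    σ.eval z = 0 ∧
      ((p.rootMultiplicity z : R) - 1) * (derivative σ).eval z + τ.eval z = 0 := by
  obtain ⟨q, hpq, hq⟩ := exists_eq_pow_rootMultiplicity_mul_and_not_dvd p hp z
  obtain ⟨k, hk⟩ := Nat.exists_eq_add_of_le' hm
  rw [hk] at hpq ⊢
  have hqz : q.eval z ≠ 0 := fun h => hq (dvd_iff_isRoot.mpr h)
  have hk1 : (k : R) + 1 ≠ 0 := Nat.cast_add_one_ne_zero k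
  have hk2 : (k : R) + 2 ≠ 0 := by exact_mod_cast (k + 1).succ_ne_zero
  have hreduced := ode_div_X_sub_C_pow (hpq ▸ hode)
  have hσ : σ.eval z = 0 := by
    simpa [hk1, hk2, hqz] using congrArg (eval z) hreduced
  refine ⟨hσ, (mul_eq_zero.mp ?_).resolve_right (mul_ne_zero hk2 hqz)⟩
  have hderiv := congrArg (fun f => (derivative f).eval z) hreduced
  simp only [derivative_add, derivative_mul, derivative_X_sub_C, derivative_zero, eval_add,
    eval_sub, eval_mul, eval_one, eval_X, eval_C, eval_zero, sub_self, hσ] at hderiv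
  push_cast
  linear_combination hderiv

lemma separable_of_ode {K : Type*} [Field K] [CharZero K] {p σ τ ρ : K[X]} (hp : p ≠ 0)
    (hode : σ * derivative (derivative p) + τ * derivative p + ρ * p = 0)
    (hindicial : ∀ z : AlgebraicClosure K, aeval z σ = 0 → ∀ m : ℕ, 2 ≤ m → m ≤ p.natDegree →
      ((m : AlgebraicClosure K) - 1) * aeval z (derivative σ) + aeval z τ ≠ 0) :
    p.Separable := by
  rw [separable_def, isCoprime_iff_aeval_ne_zero_of_isAlgClosed K (AlgebraicClosure K)]
  intro z
  by_contra! hz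
  let φ := algebraMap K (AlgebraicClosure K)
  have hpφ : p.map φ ≠ 0 := Polynomial.map_ne_zero hp
  have hodeφ : σ.map φ * derivative (derivative (p.map φ)) + τ.map φ * derivative (p.map φ)
      + ρ.map φ * p.map φ = 0 := by
    simpa only [Polynomial.map_add, Polynomial.map_mul, Polynomial.map_zero, derivative_map]
      using congrArg (Polynomial.map φ) hode
  have hm : 2 ≤ (p.map φ).rootMultiplicity z :=
    (one_lt_rootMultiplicity_iff_isRoot hpφ).mpr <| by
      simpa only [IsRoot, derivative_map, φ, eval_map_algebraMap] using hz
  have hdeg : (p.map φ).rootMultiplicity z ≤ p.natDegree := by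
    classical
    rw [← count_roots]
    exact ((Multiset.count_le_card z _).trans (card_roots' _)).trans natDegree_map_le
  obtain ⟨hσ, h⟩ := indicial_equation_of_ode hpφ hodeφ hm
  simp only [derivative_map, φ, eval_map_algebraMap] at hσ h
  exact hindicial z hσ _ hm hdeg h

/-- The coefficient of `((x - 1) / 2) ^ k` in `n! • P_n^{(a,b)}(x)`. -/
def jacobiCoeff {R : Type*} [CommSemiring R] (a b : R) (n k : ℕ) : R :=
  (n.choose k : R) * (∏ i ∈ Finset.Ico k n, (a + i + 1)) *
    (∏ i ∈ Finset.range k, (a + b + n + 1 + i))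

lemma jacobiCoeff_succ {R : Type*} [CommRing R] (a b : R) {n k : ℕ} (hk : k < n) :
    ((k : R) + 1) * (k + 1 + a) * jacobiCoeff a b n (k + 1)
      = ((n : R) - k) * (n + k + a + b + 1) * jacobiCoeff a b n k := by
  have hchoose : (n.choose (k + 1) : R) * (k + 1) = n.choose k * ((n : R) - k) := by
    rw [← Nat.cast_sub hk.le]
    exact_mod_cast congrArg (Nat.cast : ℕ → R) (Nat.choose_succ_right_eq n k)
  unfold jacobiCoeff
  rw [Finset.prod_range_succ, Finset.prod_eq_prod_Ico_succ_bot hk]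
  linear_combination (a + k + 1) * (∏ i ∈ Finset.Ico (k + 1) n, (a + i + 1)) *
    (∏ i ∈ Finset.range k, (a + b + n + 1 + i)) * (a + b + n + 1 + k) * hchoose

variable {K : Type*} [Field K]

/-- The Jacobi polynomial `P_n^{(a,b)}` over an arbitrary field, as a formal polynomial; it is
meaningful only when `n!` and `2` are invertible. -/
noncomputable def jacobiPoly (a b : K) (n : ℕ) : K[X] :=
  C (n.factorial : K)⁻¹ *
    ∑ k ∈ Finset.range (n + 1), C (jacobiCoeff a b n k) * (C 2⁻¹ * (X - 1)) ^ k

lemma natDegree_jacobiPoly_le (a b : K) (n : ℕ) : (jacobiPoly a b n).natDegree ≤ n := by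
  have hlinear : (C (2⁻¹ : K) * (X - 1)).natDegree ≤ 1 :=
    (natDegree_C_mul_le _ _).trans (natDegree_X_sub_C_le 1)
  refine (natDegree_C_mul_le _ _).trans (natDegree_sum_le_of_forall_le _ _ fun k hk => ?_)
  calc (C (jacobiCoeff a b n k) * (C 2⁻¹ * (X - 1)) ^ k).natDegree
      ≤ k * 1 := (natDegree_C_mul_le _ _).trans (natDegree_pow_le_of_le k hlinear)
    _ ≤ n := by simpa [Nat.lt_succ_iff] using hk

lemma eval_jacobiPoly (a b : K) (n : ℕ) (x : K) :
    (jacobiPoly a b n).eval x = (n.factorial : K)⁻¹ *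
      ∑ k ∈ Finset.range (n + 1), jacobiCoeff a b n k * ((x - 1) / 2) ^ k := by
  simp only [jacobiPoly, eval_mul, eval_C, eval_finsetSum, eval_pow, eval_sub, eval_X, eval_one,
    div_eq_inv_mul]

lemma eval_one_jacobiPoly (a b : K) (n : ℕ) :
    (jacobiPoly a b n).eval 1 = (n.factorial : K)⁻¹ * ∏ i ∈ Finset.range n, (a + i + 1) := by
  simp [eval_jacobiPoly, jacobiCoeff, Finset.sum_range_succ']

lemma jacobi_operator_pow [NeZero (2 : K)] (a b : K) (n k : ℕ) :
    (X ^ 2 - 1) * derivative (derivative ((C 2⁻¹ * (X - 1)) ^ k))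
      + (C (a + b + 2) * X + C (a - b)) * derivative ((C 2⁻¹ * (X - 1)) ^ k)
      + C (-((n : K) * (n + a + b + 1))) * (C 2⁻¹ * (X - 1)) ^ k
    = C ((k : K) * (k + a)) * (C 2⁻¹ * (X - 1)) ^ (k - 1)
      - C (((n : K) - k) * (n + k + a + b + 1)) * (C 2⁻¹ * (X - 1)) ^ k := by
  have hhalf : (C 2⁻¹ : K[X]) * 2 = 1 := by
    rw [← map_ofNat C 2, ← C_mul, inv_mul_cancel₀ two_ne_zero, C_1]
  set t : K[X] := C 2⁻¹ * (X - 1) with ht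
  have hX : (X : K[X]) = 2 * t + 1 := by linear_combination (1 - X) * hhalf - 2 * ht
  have hdt : derivative t = C 2⁻¹ := by simp [ht]
  rcases k with _ | _ | k
  · simp
  · simp only [zero_add, pow_one, hdt, derivative_C, hX]
    push_cast [map_neg, map_mul, map_add, map_sub, map_natCast, map_ofNat, map_one]
    linear_combination ((C a + C b + 2) * t + C a + 1) * hhalf
  · simp only [derivative_pow_succ, derivative_mul, derivative_C, hdt, hX, Nat.add_sub_cancel]
    push_cast [map_neg, map_mul, map_add, map_sub, map_natCast, map_ofNat, map_one]
    linear_combination ((2 * C 2⁻¹ + 1) * (t + 1) * (k + 2) * (k + 1) * t ^ (k + 1)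
      + ((C a + C b + 2) * t + C a + 1) * (k + 2) * t ^ (k + 1)) * hhalf

lemma jacobiPoly_ode [NeZero (2 : K)] (a b : K) (n : ℕ) :
    (X ^ 2 - 1) * derivative (derivative (jacobiPoly a b n))
      + (C (a + b + 2) * X + C (a - b)) * derivative (jacobiPoly a b n)
      + C (-((n : K) * (n + a + b + 1))) * jacobiPoly a b n = 0 := by
  have hrec : ∀ k ∈ Finset.range n,
      C (jacobiCoeff a b n (k + 1)) * (C (((k + 1 : ℕ) : K) * ((k + 1 : ℕ) + a))
        * (C 2⁻¹ * (X - 1)) ^ k) =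
      C (jacobiCoeff a b n k) * (C (((n : K) - k) * (n + k + a + b + 1))
        * (C 2⁻¹ * (X - 1)) ^ k) := by
    intro k hk
    rw [← mul_assoc, ← mul_assoc, ← C_mul, ← C_mul]
    congr 2
    push_cast
    linear_combination jacobiCoeff_succ a b (Finset.mem_range.mp hk)
  calc _ = C (n.factorial : K)⁻¹ * ∑ k ∈ Finset.range (n + 1), C (jacobiCoeff a b n k) *
        (C ((k : K) * (k + a)) * (C 2⁻¹ * (X - 1)) ^ (k - 1)
          - C (((n : K) - k) * (n + k + a + b + 1)) * (C 2⁻¹ * (X - 1)) ^ k) := by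
        simp only [jacobiPoly, derivative_C_mul, derivative_sum, Finset.mul_sum,
          ← Finset.sum_add_distrib, ← jacobi_operator_pow]
        refine Finset.sum_congr rfl fun k _ => ?_
        ring
    _ = 0 := by
        rw [Finset.sum_congr rfl fun _ _ => mul_sub _ _ _, Finset.sum_sub_distrib,
          Finset.sum_range_succ', Finset.sum_range_succ _ n]
        simp only [Nat.add_sub_cancel]
        rw [Finset.sum_congr rfl hrec]
        simp

variable [CharZero K]

lemma jacobiPoly_ne_zero {a : K} (b : K) {n : ℕ}
    (ha : ∀ k : ℕ, 1 ≤ k → k ≤ n → a ≠ -(k : K)) : jacobiPoly a b n ≠ 0 := by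
  intro h
  have heval := eval_one_jacobiPoly a b n
  rw [h, eval_zero, eq_comm, mul_eq_zero, inv_eq_zero, Nat.cast_eq_zero,
    or_iff_right n.factorial_ne_zero, Finset.prod_eq_zero_iff] at heval
  obtain ⟨i, hi, hai⟩ := heval
  refine ha (i + 1) i.succ_pos (Finset.mem_range.mp hi) ?_
  push_cast
  linear_combination hai

theorem stmt18_general {a b : K} {n : ℕ} (hne : jacobiPoly a b n ≠ 0)
    (ha : ∀ k : ℕ, 2 ≤ k → k ≤ n → a ≠ -(k : K))
    (hb : ∀ k : ℕ, 2 ≤ k → k ≤ n → b ≠ -(k : K)) : (jacobiPoly a b n).Separable := by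
  refine separable_of_ode hne (jacobiPoly_ode a b n) fun z hz m hm hmdeg hindicial => ?_
  have hmn : m ≤ n := hmdeg.trans (natDegree_jacobiPoly_le a b n)
  let φ := algebraMap K (AlgebraicClosure K)
  simp only [map_sub, map_add, map_mul, map_pow, map_one, map_ofNat, aeval_X, aeval_C,
    derivative_X_sq, derivative_one, sub_zero] at hz hindicial
  rcases sq_eq_one_iff.mp (sub_eq_zero.mp hz) with rfl | rfl
  · have ham : φ (a + m) = 0 := by
      rw [map_add, map_natCast]
      linear_combination hindicial / 2
    exact ha m hm hmn (eq_neg_of_add_eq_zero_left ((map_eq_zero φ).mp ham))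
  · have hbm : φ (b + m) = 0 := by
      rw [map_add, map_natCast]
      linear_combination -hindicial / 2
    exact hb m hm hmn (eq_neg_of_add_eq_zero_left ((map_eq_zero φ).mp hbm))

end

lemma jacobiC_eq_eval (α β : ℝ) (n : ℕ) :
    jacobiC α β n = fun x => (jacobiPoly (α : ℂ) β n).eval x := by
  funext x
  rw [eval_jacobiPoly]
  rfl

theorem stmt18 (n : ℕ) (hn : 1 ≤ n) (α β : ℝ)
    (hα : ∀ k : ℕ, 1 ≤ k → k ≤ n → α ≠ -(k : ℝ))
    (hβ : ∀ k : ℕ, 1 ≤ k → k ≤ n → β ≠ -(k : ℝ))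
    (hαβ : ∀ k : ℕ, n + 1 ≤ k → k ≤ 2 * n → α + β ≠ -(k : ℝ)) :
    ∀ z : ℂ, jacobiC α β n z = 0 → deriv (jacobiC α β n) z ≠ 0 := by
  intro z hz
  rw [jacobiC_eq_eval] at hz ⊢
  rw [Polynomial.deriv]
  have hsep : (jacobiPoly (α : ℂ) β n).Separable :=
    stmt18_general (jacobiPoly_ne_zero _ fun k h1 hk => by exact_mod_cast hα k h1 hk)
      (fun k h2 hk => by exact_mod_cast hα k (one_le_two.trans h2) hk)
      (fun k h2 hk => by exact_mod_cast hβ k (one_le_two.trans h2) hk)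
  exact hsep.eval₂_derivative_ne_zero (RingHom.id ℂ) hz
end

section
/- Let m ∈ ℕ with m ≥ 1 and let α, β ∈ ℝ be such that either both β ∈ (−1,0) and α+1−m ∈ (−1,0), or both β > 0 and α+1−m > 0. Then P_m^{(−α−1,β−1)}(x) ≠ 0 for every real x ∈ (−1,1). -/
open Finset

/-- Jacobi polynomial `P_n^{(α,β)}(x)` for arbitrary real parameters. -/
noncomputable def jacobi (α β : ℝ) (n : ℕ) (x : ℝ) : ℝ :=
  (Nat.factorial n : ℝ)⁻¹ *
    ∑ k ∈ Finset.range (n + 1),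
      (n.choose k : ℝ) *
        (∏ i ∈ Finset.Ico k n, (α + i + 1)) *
        (∏ i ∈ Finset.range k, (α + β + n + 1 + i)) *
        ((x - 1) / 2) ^ k

/-!
Re-expanding around both endpoints, with the Chu–Vandermonde identity, gives
`n! P_n^{(α,β)}(x) = ∑ s, C(n,s) A_s Q_s t ^ s (t + 1) ^ (n - s)` for `t = (x - 1) / 2`, where
`A_s = ∏_{s ≤ i < n} (α + i + 1)` and `Q_s = ∏_{j < s} (β + n - j)`. On `(-1, 1)` we have
`t < 0 < t + 1`, and `A_0 A_s Q_s t ^ s = A_s ^ 2 ∏_{i < s} (α + i + 1) (β + n - i) t`. So if every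
`(α + i + 1) (β + n - i)` is negative, all summands are nonzero and have the sign of `A_0`.
-/

section CommRing

variable {R : Type*} [CommRing R]

lemma descPochhammer_smeval_eq_prod_range (k : ℕ) (r : R) :
    (descPochhammer ℤ k).smeval r = ∏ j ∈ range k, (r - j) := by
  rw [Polynomial.descPochhammer_smeval_eq_ascPochhammer,
    Polynomial.ascPochhammer_smeval_eq_eval, ← descPochhammer_eval_eq_ascPochhammer,
    descPochhammer_eval_eq_prod_range]

lemma prod_Ico_add_add_one_eq_prod_range_sub (a : R) {s k : ℕ} (hs : s ≤ k) :
    ∏ i ∈ Ico s k, (a + i + 1) = ∏ j ∈ range (k - s), (a + k - j) := by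
  rw [prod_Ico_eq_prod_range, ← prod_range_reflect]
  refine prod_congr rfl fun j hj ↦ ?_
  have hindex : s + (k - s - 1 - j) + 1 = k - j := by grind
  have hjk : j ≤ k := by grind
  rw [add_assoc, add_sub_assoc, ← Nat.cast_add_one, hindex, Nat.cast_sub hjk]

lemma sum_choose_mul_prod_Ico_mul_prod_range (a c : R) (k : ℕ) :
    ∑ s ∈ range (k + 1),
      (k.choose s : R) * ((∏ i ∈ Ico s k, (a + i + 1)) * ∏ j ∈ range s, (c - j)) =
      ∏ i ∈ range k, (a + c + 1 + i) := by
  have vandermonde := Ring.descPochhammer_smeval_add k (Commute.all c (a + k))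
  simp only [descPochhammer_smeval_eq_prod_range, Nat.sum_antidiagonal_eq_sum_range_succ_mk]
    at vandermonde
  calc
    _ = ∏ j ∈ range k, (c + (a + k) - j) := by
      rw [vandermonde]
      refine sum_congr rfl fun s hs ↦ ?_
      rw [prod_Ico_add_add_one_eq_prod_range_sub a (mem_range_succ_iff.mp hs),
        mul_comm (∏ j ∈ range s, _)]
    _ = ∏ i ∈ Ico 0 k, (a + c + i + 1) := by
      rw [prod_Ico_add_add_one_eq_prod_range_sub _ k.zero_le, Nat.sub_zero]
      exact prod_congr rfl fun _ _ ↦ by ring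
    _ = _ := by
      rw [Nat.Ico_zero_eq_range]
      exact prod_congr rfl fun _ _ ↦ by ring

lemma sum_Ico_choose_mul_choose_mul_pow (t : R) (s n : ℕ) :
    ∑ k ∈ Ico s (n + 1), (n.choose k : R) * k.choose s * t ^ k =
      n.choose s * (t ^ s * (t + 1) ^ (n - s)) := by
  rcases lt_or_ge n s with hns | hsn
  · rw [Ico_eq_empty (by lia), sum_empty, Nat.choose_eq_zero_of_lt hns, Nat.cast_zero, zero_mul]
  rw [sum_Ico_eq_sum_range, add_pow, Nat.sub_add_comm hsn, mul_sum, mul_sum]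
  refine sum_congr rfl fun l _ ↦ ?_
  have hchoose : (n.choose (s + l) : R) * (s + l).choose s = n.choose s * (n - s).choose l := by
    rw [← Nat.cast_mul, Nat.choose_mul (Nat.le_add_right s l), Nat.add_sub_cancel_left,
      Nat.cast_mul]
  rw [hchoose, pow_add, one_pow]
  ring

lemma sum_choose_mul_prod_mul_pow_eq_sum_pow_mul_pow (a b t : R) (n : ℕ) :
    ∑ k ∈ range (n + 1), (n.choose k : R) * (∏ i ∈ Ico k n, (a + i + 1)) *
        (∏ i ∈ range k, (a + b + n + 1 + i)) * t ^ k =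
      ∑ s ∈ range (n + 1), (n.choose s : R) * (t ^ s * (t + 1) ^ (n - s)) *
        ((∏ i ∈ Ico s n, (a + i + 1)) * ∏ j ∈ range s, (b + n - j)) := by
  let A (s k : ℕ) : R := ∏ i ∈ Ico s k, (a + i + 1)
  let Q (s : ℕ) : R := ∏ j ∈ range s, (b + n - j)
  have expand (k : ℕ) : ∏ i ∈ range k, (a + b + n + 1 + i) =
      ∑ s ∈ range (k + 1), (k.choose s : R) * (A s k * Q s) := by
    rw [sum_choose_mul_prod_Ico_mul_prod_range, ← add_assoc]
  have hA {s k : ℕ} (hs : s ≤ k) (hk : k ≤ n) : A s k * A k n = A s n :=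
    prod_Ico_consecutive _ hs hk
  calc
    _ = ∑ k ∈ range (n + 1), ∑ s ∈ range (k + 1),
          (n.choose k : R) * k.choose s * t ^ k * (A s n * Q s) := by
      refine sum_congr rfl fun k hk ↦ ?_
      rw [expand, mul_sum, sum_mul]
      refine sum_congr rfl fun s hs ↦ ?_
      rw [← hA (mem_range_succ_iff.mp hs) (mem_range_succ_iff.mp hk)]
      ring
    _ = ∑ s ∈ range (n + 1), ∑ k ∈ Ico s (n + 1),
          (n.choose k : R) * k.choose s * t ^ k * (A s n * Q s) :=
      sum_comm' fun k s ↦ by simp only [mem_range, mem_Ico]; lia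
    _ = _ := by simp only [← sum_mul, sum_Ico_choose_mul_choose_mul_pow, A, Q]

end CommRing

lemma prod_range_mul_prod_Ico_mul_prod_range_mul_pow_pos {R : Type*} [CommRing R] [LinearOrder R]
    [IsStrictOrderedRing R] {f g : ℕ → R} {t : R} {s n : ℕ} (hs : s ≤ n)
    (hfg : ∀ i < n, f i * g i < 0) (ht : t < 0) :
    0 < (∏ i ∈ range n, f i) * ((∏ i ∈ Ico s n, f i) * (∏ i ∈ range s, g i) * t ^ s) := by
  have hf : ∏ i ∈ Ico s n, f i ≠ 0 :=
    prod_ne_zero_iff.mpr fun i hi ↦ left_ne_zero_of_mul (hfg i (mem_Ico.mp hi).2).ne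
  have hfgt : 0 < ∏ i ∈ range s, f i * g i * t :=
    prod_pos fun i hi ↦ mul_pos_of_neg_of_neg (hfg i ((mem_range.mp hi).trans_le hs)) ht
  calc
    0 < (∏ i ∈ Ico s n, f i) ^ 2 * ∏ i ∈ range s, f i * g i * t :=
      mul_pos (sq_pos_of_ne_zero hf) hfgt
    _ = _ := by
      rw [prod_mul_distrib, prod_mul_distrib, prod_const, card_range,
        ← prod_range_mul_prod_Ico f hs]
      ring

lemma jacobi_eq_sum_pow_mul_pow (α β : ℝ) (n : ℕ) (x : ℝ) :
    jacobi α β n x = (n.factorial : ℝ)⁻¹ *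
      ∑ s ∈ range (n + 1), (n.choose s : ℝ) * (((x - 1) / 2) ^ s * ((x + 1) / 2) ^ (n - s)) *
        ((∏ i ∈ Ico s n, (α + i + 1)) * ∏ j ∈ range s, (β + n - j)) := by
  have hx : (x - 1) / 2 + 1 = (x + 1) / 2 := by ring
  rw [jacobi, sum_choose_mul_prod_mul_pow_eq_sum_pow_mul_pow, hx]

theorem stmt19_general {α β x : ℝ} {n : ℕ} (h : ∀ i < n, (α + i + 1) * (β + n - i) < 0)
    (hx : x ∈ Set.Ioo (-1 : ℝ) 1) : jacobi α β n x ≠ 0 := by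
  have ht : (x - 1) / 2 < 0 := by linarith [hx.2]
  have hu : 0 < (x + 1) / 2 := by linarith [hx.1]
  rw [jacobi_eq_sum_pow_mul_pow]
  refine mul_ne_zero (inv_ne_zero (Nat.cast_ne_zero.mpr n.factorial_ne_zero))
    (right_ne_zero_of_mul (a := ∏ i ∈ range n, (α + i + 1)) (ne_of_gt ?_))
  rw [mul_sum]
  refine sum_pos (fun s hs ↦ ?_) nonempty_range_add_one
  have hsn : s ≤ n := mem_range_succ_iff.mp hs
  have hchoose : (0 : ℝ) < n.choose s := Nat.cast_pos.mpr (Nat.choose_pos hsn)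
  have hsign := prod_range_mul_prod_Ico_mul_prod_range_mul_pow_pos hsn h ht
  refine (mul_pos (mul_pos hchoose (pow_pos hu (n - s))) hsign).trans_eq ?_
  ring

lemma mul_neg_of_mem_Ioo_or_pos {α β : ℝ} {m i : ℕ} (hi : i < m)
    (h : (β ∈ Set.Ioo (-1 : ℝ) 0 ∧ α + 1 - m ∈ Set.Ioo (-1 : ℝ) 0) ∨
      (0 < β ∧ 0 < α + 1 - m)) :
    (-α - 1 + i + 1) * (β - 1 + m - i) < 0 := by
  have hi' : (i : ℝ) + 1 ≤ m := by exact_mod_cast hi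
  rcases h with ⟨⟨hβ₁, hβ₀⟩, hα₁, hα₀⟩ | ⟨hβ, hα⟩
  · rcases Nat.lt_or_eq_of_le hi with hlt | heq
    · have hlt' : (i : ℝ) + 1 + 1 ≤ m := by exact_mod_cast hlt
      exact mul_neg_of_neg_of_pos (by linarith) (by linarith)
    · have heq' : (i : ℝ) + 1 = m := by exact_mod_cast heq
      exact mul_neg_of_pos_of_neg (by linarith) (by linarith)
  · exact mul_neg_of_neg_of_pos (by linarith) (by linarith)

theorem stmt19 (m : ℕ) (hm : 1 ≤ m) (α β : ℝ)
    (h : (β ∈ Set.Ioo (-1 : ℝ) 0 ∧ α + 1 - m ∈ Set.Ioo (-1 : ℝ) 0) ∨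
      (0 < β ∧ 0 < α + 1 - m)) :
    ∀ x ∈ Set.Ioo (-1 : ℝ) 1, jacobi (-α - 1) (β - 1) m x ≠ 0 :=
  fun _ hx ↦ stmt19_general (fun _ hi ↦ mul_neg_of_mem_Ioo_or_pos hi h) hx
end
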